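/- The partial gradient of H with respect to the log-illumination l, namely ∇_l H(u,c,l) = ( 2 Σ_{k=1}^K uₖ(j)(l(j) + cₖ − f(j)) )_{j∈G} + 2γ ∇*∇ l, is globally Lipschitz in l on the simplex-constrained label assignments: for every u : G → ℝ^K with u(j) ∈ Δ_K for all j, every c ∈ ℝ^K and all l¹, l² : G → ℝ, ‖∇_l H(u,c,l¹) − ∇_l H(u,c,l²)‖₂ ≤ (2 + 8dγ) ‖l¹ − l²‖₂. -/

import Mathlib

open Finset

noncomputable section

/-- Discrete gradient with forward differences and mirror boundary conditions. -/
def grad {d : ℕ} (n : Fin d → ℕ) (F : (∀ i, Fin (n i)) → ℝ)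
    (j : ∀ i, Fin (n i)) (i : Fin d) : ℝ :=
  if h : (j i : ℕ) + 1 < n i then F (Function.update j i ⟨(j i : ℕ) + 1, h⟩) - F j else 0

theorem grad_sq_dir {d : ℕ} (n : Fin d → ℕ) (F : (∀ i, Fin (n i)) → ℝ) (i : Fin d) :
    ∑ j, (grad n F j i) ^ 2 ≤ 4 * ∑ j, F j ^ 2 := by
  classical
  let s : (∀ i, Fin (n i)) → (∀ i, Fin (n i)) := fun j =>
    if h : (j i : ℕ) + 1 < n i then Function.update j i ⟨(j i : ℕ) + 1, h⟩ else j
  let A : Finset (∀ i, Fin (n i)) := univ.filter (fun j => (j i : ℕ) + 1 < n i)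
  have hinj : Set.InjOn s (A : Set (∀ i, Fin (n i))) := by
    intro a ha b hb hab
    have ha' : (a i : ℕ) + 1 < n i := by simpa [A] using ha
    have hb' : (b i : ℕ) + 1 < n i := by simpa [A] using hb
    simp only [s, ha', hb', dif_pos] at hab
    funext k
    have hk := congrFun hab k
    by_cases hki : k = i
    · subst hki
      simp only [Function.update_self, Fin.mk.injEq] at hk
      exact Fin.ext (by omega)
    · simpa [Function.update_of_ne hki] using hk
  have h1 : ∑ j ∈ A, F (s j) ^ 2 ≤ ∑ j, F j ^ 2 := by
    rw [← Finset.sum_image (f := fun j => F j ^ 2) hinj]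
    exact Finset.sum_le_sum_of_subset_of_nonneg (subset_univ _) (fun _ _ _ => sq_nonneg _)
  have h2 : ∑ j ∈ A, F (s j) ^ 2 = ∑ j, if (j i : ℕ) + 1 < n i then F (s j) ^ 2 else 0 := by
    rw [Finset.sum_filter]
  have h3 : ∑ j, (grad n F j i) ^ 2 ≤
      ∑ j, (2 * (if (j i : ℕ) + 1 < n i then F (s j) ^ 2 else 0) + 2 * F j ^ 2) := by
    apply Finset.sum_le_sum
    intro j _
    by_cases h : (j i : ℕ) + 1 < n i
    · simp only [grad, s, h, dif_pos, if_true]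
      nlinarith [sq_nonneg (F (Function.update j i ⟨(j i : ℕ) + 1, h⟩) + F j)]
    · simp only [grad, h, dif_neg, if_false, not_false_eq_true]
      nlinarith [sq_nonneg (F j)]
  rw [Finset.sum_add_distrib, ← Finset.mul_sum, ← Finset.mul_sum, ← h2] at h3
  linarith

theorem grad_sq {d : ℕ} (n : Fin d → ℕ) (F : (∀ i, Fin (n i)) → ℝ) :
    ∑ j, ∑ i, (grad n F j i) ^ 2 ≤ 4 * d * ∑ j, F j ^ 2 := by
  rw [Finset.sum_comm]
  calc _ ≤ ∑ _i : Fin d, 4 * ∑ j, F j ^ 2 := Finset.sum_le_sum (fun i _ => grad_sq_dir n F i)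
    _ = _ := by simp; ring

theorem grad_sub {d : ℕ} (n : Fin d → ℕ) (F G : (∀ i, Fin (n i)) → ℝ)
    (j : ∀ i, Fin (n i)) (i : Fin d) :
    grad n (fun j => F j - G j) j i = grad n F j i - grad n G j i := by
  unfold grad
  split_ifs <;> ring

/-- The partial gradient
`∇_l H(u,c,l) = (2 Σ_k u_k(j)(l(j) + c_k − f(j)))_j + 2γ ∇*∇ l` is globally Lipschitz in
`l` with constant `2 + 8dγ` for simplex-valued `u`. Here `Lap = ∇*∇` is the discrete
Laplacian, characterized as the composition of `∇` with its adjoint with respect to the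
Euclidean inner products. -/
theorem gradl_lipschitz (d K : ℕ) (n : Fin d → ℕ)
    (f : (∀ i, Fin (n i)) → ℝ) (γ : ℝ) (hγ : 0 ≤ γ)
    (Lap : ((∀ i, Fin (n i)) → ℝ) → ((∀ i, Fin (n i)) → ℝ))
    (hLap : ∀ (F G : (∀ i, Fin (n i)) → ℝ),
      ∑ j, ∑ i, grad n F j i * grad n G j i = ∑ j, Lap F j * G j)
    (u : (∀ i, Fin (n i)) → Fin K → ℝ)
    (hu : ∀ j, (∀ k, 0 ≤ u j k) ∧ ∑ k, u j k = 1)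
    (c : Fin K → ℝ) (l₁ l₂ : (∀ i, Fin (n i)) → ℝ) :
    Real.sqrt (∑ j, (((2 * ∑ k, u j k * (l₁ j + c k - f j)) + 2 * γ * Lap l₁ j)
        - ((2 * ∑ k, u j k * (l₂ j + c k - f j)) + 2 * γ * Lap l₂ j)) ^ 2)
      ≤ (2 + 8 * (d : ℝ) * γ) * Real.sqrt (∑ j, (l₁ j - l₂ j) ^ 2) := by
  set w : (∀ i, Fin (n i)) → ℝ := fun j => l₁ j - l₂ j with hw
  set g : (∀ i, Fin (n i)) → ℝ := fun j => Lap l₁ j - Lap l₂ j with hg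
  have hadj : ∀ G : (∀ i, Fin (n i)) → ℝ,
      ∑ j, ∑ i, grad n w j i * grad n G j i = ∑ j, g j * G j := by
    intro G
    simp only [hw, hg, grad_sub, sub_mul, Finset.sum_sub_distrib, hLap]
  have hw0 : 0 ≤ ∑ j, w j ^ 2 := Finset.sum_nonneg (fun _ _ => sq_nonneg _)
  have hg0 : 0 ≤ ∑ j, g j ^ 2 := Finset.sum_nonneg (fun _ _ => sq_nonneg _)
  have hgw : ∑ j, g j * w j ≤ 4 * d * ∑ j, w j ^ 2 := by
    rw [← hadj w]
    simpa only [sq] using grad_sq n w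
  have hgg : ∑ j, g j ^ 2 ≤ (4 * d) ^ 2 * ∑ j, w j ^ 2 := by
    have hcs := Finset.sum_mul_sq_le_sq_mul_sq
      (univ : Finset ((∀ i, Fin (n i)) × Fin d))
      (fun p => grad n w p.1 p.2) (fun p => grad n g p.1 p.2)
    simp only [Fintype.sum_prod_type] at hcs
    rw [hadj g] at hcs
    have e : ∑ j, g j * g j = ∑ j, g j ^ 2 := by simp only [sq]
    rw [e] at hcs
    have hm := mul_le_mul (grad_sq n w) (grad_sq n g)
      (Finset.sum_nonneg (fun _ _ => Finset.sum_nonneg (fun _ _ => sq_nonneg _)))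
      (by positivity)
    rcases hg0.eq_or_lt with h | h
    · rw [← h]; positivity
    · refine le_of_mul_le_mul_right ?_ h
      nlinarith
  have hD : ∀ j, (((2 * ∑ k, u j k * (l₁ j + c k - f j)) + 2 * γ * Lap l₁ j)
        - ((2 * ∑ k, u j k * (l₂ j + c k - f j)) + 2 * γ * Lap l₂ j)) = 2 * w j + 2 * γ * g j := by
    intro j
    have h : ∑ k, u j k * (l₁ j + c k - f j) - ∑ k, u j k * (l₂ j + c k - f j) = w j := by
      rw [← Finset.sum_sub_distrib]
      calc _ = ∑ k, u j k * w j := Finset.sum_congr rfl (fun k _ => by simp only [hw]; ring)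
        _ = w j := by rw [← Finset.sum_mul, (hu j).2, one_mul]
    simp only [hg]
    linarith
  simp only [hD]
  have hexp : ∑ j, (2 * w j + 2 * γ * g j) ^ 2
      = 4 * ∑ j, w j ^ 2 + 8 * γ * ∑ j, g j * w j + 4 * γ ^ 2 * ∑ j, g j ^ 2 := by
    simp only [Finset.mul_sum, ← Finset.sum_add_distrib]
    exact Finset.sum_congr rfl (fun j _ => by ring)
  have hL : 0 ≤ 2 + 8 * (d : ℝ) * γ := by positivity
  apply Real.sqrt_le_iff.mpr
  refine ⟨by positivity, ?_⟩
  rw [mul_pow, Real.sq_sqrt hw0, hexp]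
  have a1 := mul_le_mul_of_nonneg_left hgw (show 0 ≤ 8 * γ by positivity)
  have a2 := mul_le_mul_of_nonneg_left hgg (show 0 ≤ 4 * γ ^ 2 by positivity)
  nlinarith
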